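/- Let A be a uniform algebra on a compact Hausdorff space K and let Γ ⊆ K be a closed boundary for A in which the set of strong boundary points of A is dense (these properties hold for the Shilov boundary of A). If there exists a strong peak point for A that is a limit point of Γ (i.e., a point t₀ ∈ Γ such that every neighborhood of t₀ meets Γ∖{t₀}), then A has the convex diametral local diameter two property: the closed unit ball B_A equals the closed convex hull of the set of Δ-points of A. -/

import Mathlib

set_option maxHeartbeats 1000000
set_option synthInstance.maxHeartbeats 1000000

/-- `t₀` is a strong boundary point for the algebra `A ⊆ C(K,ℂ)`. -/
def IsStrongBoundaryPoint {K : Type*} [TopologicalSpace K] [CompactSpace K]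
    (A : Subalgebra ℂ C(K, ℂ)) (t₀ : K) : Prop :=
  ∀ U : Set K, IsOpen U → t₀ ∈ U →
    ∃ h ∈ A, h t₀ = 1 ∧ ‖h‖ = 1 ∧ ∃ c : ℝ, c < 1 ∧ ∀ t ∉ U, ‖h t‖ ≤ c

/-- `t₀` is a strong peak point for the algebra `A ⊆ C(K,ℂ)`: some `h ∈ A` satisfies
`|h t₀| = ‖h‖` and `‖h‖ > sup_{t ∈ K∖U} |h t|` for every open neighborhood `U` of `t₀`. -/
def IsStrongPeakPoint {K : Type*} [TopologicalSpace K] [CompactSpace K]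
    (A : Subalgebra ℂ C(K, ℂ)) (t₀ : K) : Prop :=
  ∃ h ∈ A, ‖h t₀‖ = ‖h‖ ∧
    ∀ U : Set K, IsOpen U → t₀ ∈ U → ∃ c : ℝ, c < ‖h‖ ∧ ∀ t ∉ U, ‖h t‖ ≤ c

theorem mobius_aux (z : ℂ) (r : ℝ) (hz : ‖z‖ ≤ 1) (hr : 0 < r) (hr1 : r < 1) :
    ‖(r : ℂ) - z‖ ≤ ‖1 - (r : ℂ) * z‖ := by
  apply le_of_sq_le_sq _ (norm_nonneg _) 
  have h1 : ‖z‖ ^ 2 ≤ 1 := by nlinarith [norm_nonneg z]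
  rw [Complex.sq_norm, Complex.normSq_apply] at *
  rw [Complex.sq_norm, Complex.normSq_apply]
  simp at *
  nlinarith [mul_nonneg (by nlinarith : (0:ℝ) ≤ 1 - r ^ 2) (sub_nonneg.2 h1)]

theorem exists_psi {K : Type*} [TopologicalSpace K] [CompactSpace K]
    (A : Subalgebra ℂ C(K, ℂ)) (hAclosed : IsClosed (A : Set C(K, ℂ))) (t : K)
    (ht : IsStrongBoundaryPoint A t) (U : Set K) (hU : IsOpen U) (htU : t ∈ U)
    (η : ℝ) (hη : 0 < η) :
    ∃ ψ : A, (∀ x, ‖(ψ : C(K, ℂ)) x‖ ≤ 1) ∧ (ψ : C(K, ℂ)) t = -1 ∧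
      ∀ x ∉ U, ‖(ψ : C(K, ℂ)) x - 1‖ ≤ η := by
  obtain ⟨h, hA, h1, hn, c, hc, hcU⟩ := ht U hU htU
  have : CompleteSpace A := hAclosed.completeSpace_coe
  obtain ⟨q, hq0, hq1, hq⟩ : ∃ q : ℝ, 0 < q ∧ q < 1 ∧ 2 * q ≤ η * (1 - c) := by
    have : 0 < η * (1 - c) := mul_pos hη (by linarith)
    refine ⟨min (1/2) (η * (1 - c) / 2), by positivity, ?_, ?_⟩
    · have := min_le_left (1/2) (η * (1 - c) / 2); linarith
    · have := min_le_right (1/2) (η * (1 - c) / 2); linarith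
  have hx1 : ∀ x, ‖h x‖ ≤ 1 := fun x => hn ▸ h.norm_coe_le_norm x
  set r : ℝ := 1 - q with hr
  let hh : A := ⟨h, hA⟩
  have hnn : ‖(r : ℂ) • hh‖ < 1 := by
    rw [norm_smul]
    have : ‖hh‖ = 1 := hn
    rw [this, Complex.norm_real, Real.norm_eq_abs, abs_of_pos (by linarith)]; linarith
  obtain ⟨v, hv⟩ := isUnit_iff_exists_inv.1 (isUnit_one_sub_of_norm_lt_one hnn)
  have hvx : ∀ x, (1 - (r : ℂ) * h x) * (v : C(K, ℂ)) x = 1 := by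
    intro x
    have := congrArg (fun a : A => (a : C(K, ℂ)) x) hv
    simpa [hh] using this
  refine ⟨((r : ℂ) • 1 - hh) * v, ?_, ?_, ?_⟩
  · intro x
    have e : ((((r : ℂ) • 1 - hh) * v : A) : C(K, ℂ)) x = ((r : ℂ) - h x) * (v : C(K, ℂ)) x := by
      simp [hh]
    rw [e]
    have := mobius_aux (h x) r (hx1 x) (by linarith) (by linarith)
    calc _ = ‖(r : ℂ) - h x‖ * ‖(v : C(K, ℂ)) x‖ := norm_mul _ _
      _ ≤ ‖1 - (r : ℂ) * h x‖ * ‖(v : C(K, ℂ)) x‖ := by gcongr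
      _ = 1 := by rw [← norm_mul, hvx, norm_one]
  · have e : ((((r : ℂ) • 1 - hh) * v : A) : C(K, ℂ)) t = ((r : ℂ) - h t) * (v : C(K, ℂ)) t := by
      simp [hh]
    have := hvx t
    rw [e, h1]; rw [h1] at this
    linear_combination -this
  · intro x hx
    have e : ((((r : ℂ) • 1 - hh) * v : A) : C(K, ℂ)) x = ((r : ℂ) - h x) * (v : C(K, ℂ)) x := by
      simp [hh]
    have hvx' := hvx x
    have e2 : ((r : ℂ) - h x) * (v : C(K, ℂ)) x - 1
        = -((q : ℂ) * (1 + h x) * (v : C(K, ℂ)) x) := by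
      have : (r : ℂ) = 1 - q := by simp [hr]
      rw [this] at hvx' ⊢
      linear_combination hvx'
    rw [e, e2, norm_neg, norm_mul, norm_mul, Complex.norm_real, Real.norm_eq_abs, abs_of_pos hq0]
    have a1 : ‖1 + h x‖ ≤ 2 := (norm_add_le _ _).trans (by rw [norm_one]; linarith [hx1 x])
    have a2 : (1 - c) ≤ ‖1 - (r : ℂ) * h x‖ := by
      have b1 := norm_sub_norm_le (1 : ℂ) ((r : ℂ) * h x)
      rw [norm_one, norm_mul, Complex.norm_real, Real.norm_eq_abs, abs_of_pos (by linarith)] at b1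
      nlinarith [hcU x hx, norm_nonneg (h x)]
    have a3 : ‖1 - (r : ℂ) * h x‖ * ‖(v : C(K, ℂ)) x‖ = 1 := by
      rw [← norm_mul, hvx', norm_one]
    set V := ‖(v : C(K, ℂ)) x‖ with hV
    have hV0 : 0 ≤ V := norm_nonneg _
    have a4 : (1 - c) * V ≤ 1 := (mul_le_mul_of_nonneg_right a2 hV0).trans a3.le
    calc q * ‖1 + h x‖ * V ≤ q * 2 * V := by gcongr
      _ = (2 * q) * V := by ring
      _ ≤ (η * (1 - c)) * V := by gcongr
      _ = η * ((1 - c) * V) := by ring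
      _ ≤ η * 1 := by gcongr
      _ = η := mul_one _

theorem delta_aux {K : Type*} [TopologicalSpace K] [CompactSpace K] [T2Space K]
    (A : Subalgebra ℂ C(K, ℂ)) (hAclosed : IsClosed (A : Set C(K, ℂ))) (t₀ : K)
    (hacc : AccPt t₀ (Filter.principal {t | IsStrongBoundaryPoint A t}))
    (f : A) (hf : ∀ x, ‖(f : C(K, ℂ)) x‖ ≤ 1) (hft : ‖(f : C(K, ℂ)) t₀‖ = 1)
    (ε : ℝ) (hε : 0 < ε) :
    f ∈ closure (convexHull ℝ {g : A | ‖g‖ ≤ 1 ∧ 2 - ε ≤ ‖f - g‖}) := by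
  rw [Metric.mem_closure_iff]
  intro η hη
  obtain ⟨n, hn⟩ := exists_nat_gt (4 / η)
  have hn0 : (0 : ℝ) < n := lt_trans (by positivity) hn
  set U : Set K := {x | 1 - ε / 2 < ‖(f : C(K, ℂ)) x‖} with hU
  have hUo : IsOpen U := isOpen_lt continuous_const (by fun_prop)
  have htU : t₀ ∈ U := by simp only [hU, Set.mem_ofPred_eq, hft]; linarith
  have hinf : (U ∩ {t | IsStrongBoundaryPoint A t}).Infinite := by
    apply Set.Infinite.of_accPt (x := t₀)
    rw [accPt_iff_nhds] at hacc ⊢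
    intro V hV
    obtain ⟨y, ⟨hy1, hy2⟩, hy3⟩ := hacc (V ∩ U) (Filter.inter_mem hV (hUo.mem_nhds htU))
    exact ⟨y, ⟨hy1.1, hy1.2, hy2⟩, hy3⟩
  obtain ⟨s, hsU, hsn⟩ := hinf.exists_subset_card_eq n
  obtain ⟨W, hW, hWd⟩ := s.finite_toSet.t2_separation
  have hψ : ∀ t : K, ∃ ψ : A, t ∈ s → ((∀ x, ‖(ψ : C(K, ℂ)) x‖ ≤ 1) ∧ (ψ : C(K, ℂ)) t = -1 ∧
      ∀ x ∉ W t, ‖(ψ : C(K, ℂ)) x - 1‖ ≤ η / 4) := by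
    intro t
    by_cases ht : t ∈ s
    · obtain ⟨ψ, h⟩ := exists_psi A hAclosed t (hsU ht).2 (W t) (hW t).2 (hW t).1 (η / 4)
        (by positivity)
      exact ⟨ψ, fun _ => h⟩
    · exact ⟨0, fun h => absurd h ht⟩
  choose ψ hψ using hψ
  have hw : ∑ t ∈ s, (1 / (n : ℝ)) = 1 := by
    rw [Finset.sum_const, hsn, nsmul_eq_mul]; field_simp
  refine ⟨∑ t ∈ s, (1 / (n : ℝ)) • (f * ψ t), ?_, ?_⟩
  · apply (convex_convexHull ℝ _).sum_mem (fun _ _ => by positivity) hw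
    intro t ht
    apply subset_convexHull
    obtain ⟨h1, h2, h3⟩ := hψ t ht
    constructor
    · change ‖((f * ψ t : A) : C(K, ℂ))‖ ≤ 1
      rw [ContinuousMap.norm_le _ zero_le_one]
      intro x
      change ‖(f : C(K, ℂ)) x * (ψ t : C(K, ℂ)) x‖ ≤ 1
      rw [norm_mul]
      exact mul_le_one₀ (hf x) (norm_nonneg _) (h1 x)
    · have h4 : ‖((f - f * ψ t : A) : C(K, ℂ)) t‖ ≤ ‖f - f * ψ t‖ :=
        ContinuousMap.norm_coe_le_norm _ _
      refine le_trans ?_ h4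
      have e : ((f - f * ψ t : A) : C(K, ℂ)) t = 2 * (f : C(K, ℂ)) t := by
        change (f : C(K, ℂ)) t - (f : C(K, ℂ)) t * (ψ t : C(K, ℂ)) t = _
        rw [h2]; ring
      rw [e, norm_mul]
      have : 1 - ε / 2 < ‖(f : C(K, ℂ)) t‖ := (hsU ht).1
      norm_num
      linarith
  · rw [dist_eq_norm]
    have hlt : η / 4 + 2 / n < η := by
      have : 4 < n * η := by rwa [div_lt_iff₀ hη] at hn
      have : 2 / (n : ℝ) < η / 2 := by
        rw [div_lt_iff₀ hn0]; linarith
      linarith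
    refine lt_of_le_of_lt ?_ hlt
    change ‖((f - ∑ t ∈ s, (1 / (n : ℝ)) • (f * ψ t) : A) : C(K, ℂ))‖ ≤ _
    rw [ContinuousMap.norm_le _ (by positivity)]
    intro x
    have hw' : ∑ t ∈ s, ((1 / (n : ℝ) : ℝ) : ℂ) = 1 := by exact_mod_cast congrArg Complex.ofReal hw
    have e : ((f - ∑ t ∈ s, (1 / (n : ℝ)) • (f * ψ t) : A) : C(K, ℂ)) x =
        -((f : C(K, ℂ)) x * ∑ t ∈ s, ((1 / (n : ℝ) : ℝ) : ℂ) * ((ψ t : C(K, ℂ)) x - 1)) := by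
      have e1 : ((f - ∑ t ∈ s, (1 / (n : ℝ)) • (f * ψ t) : A) : C(K, ℂ)) x =
        (f : C(K, ℂ)) x - ∑ t ∈ s, ((1 / (n : ℝ) : ℝ) : ℂ) * ((f : C(K, ℂ)) x * (ψ t : C(K, ℂ)) x) := by
        simp [ContinuousMap.sum_apply]
      rw [e1]
      simp only [mul_sub, mul_one, Finset.sum_sub_distrib, hw', Finset.mul_sum]
      rw [neg_sub]
      congr 1
      exact Finset.sum_congr rfl (fun t _ => by ring)
    rw [e, norm_neg, norm_mul]
    classical
    have hcard : ((s.filter (fun t => x ∈ W t)).card : ℝ) ≤ 1 := by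
      have : (s.filter (fun t => x ∈ W t)).card ≤ 1 := by
        rw [Finset.card_le_one]
        intro a ha b hb
        rw [Finset.mem_filter] at ha hb
        by_contra hab
        exact Set.disjoint_left.1 (hWd (Finset.mem_coe.2 ha.1) (Finset.mem_coe.2 hb.1) hab) ha.2 hb.2
      exact_mod_cast this
    have hb : ‖∑ t ∈ s, ((1 / (n : ℝ) : ℝ) : ℂ) * ((ψ t : C(K, ℂ)) x - 1)‖ ≤ η / 4 + 2 / n := by
      calc _ ≤ ∑ t ∈ s, ‖((1 / (n : ℝ) : ℝ) : ℂ) * ((ψ t : C(K, ℂ)) x - 1)‖ := norm_sum_le _ _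
        _ ≤ ∑ t ∈ s, ((1 / (n : ℝ)) * (η / 4) + (1 / (n : ℝ)) * (if x ∈ W t then 2 else 0)) := by
          apply Finset.sum_le_sum
          intro t ht
          obtain ⟨h1, h2, h3⟩ := hψ t ht
          rw [norm_mul, Complex.norm_real, Real.norm_eq_abs, abs_of_pos (by positivity), ← mul_add]
          gcongr
          split_ifs with hx
          · have := norm_sub_le ((ψ t : C(K, ℂ)) x) 1
            rw [norm_one] at this
            linarith [h1 x]
          · linarith [h3 x hx]
        _ = η / 4 + (2 / n) * (s.filter (fun t => x ∈ W t)).card := by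
          rw [Finset.sum_add_distrib, ← Finset.sum_mul, hw, ← Finset.mul_sum, ← Finset.sum_filter,
            Finset.sum_const, nsmul_eq_mul]
          ring
        _ ≤ η / 4 + (2 / n) * 1 := by gcongr
        _ = _ := by ring
    calc _ ≤ 1 * (η / 4 + 2 / n) := by gcongr; exact hf x
      _ = _ := one_mul _

theorem key_near (u a z s : ℂ) (ρ δ σ : ℝ) (hu : ‖u‖ = 1) (ha : a = ρ * u) (hρ : 0 ≤ ρ)
    (hδ : 0 < δ) (hρδ : ρ ≤ 1 - δ) (hσ : σ = 1 ∨ σ = -1) (hs : ‖s‖ ^ 2 ≤ s.re)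
    (hz : ‖z - a‖ ≤ δ / 2) :
    ‖σ * u * (1 - s) + a * (s - s ^ 2) + z * s ^ 2‖ ≤ 1 := by
  have e : σ * u * (1 - s) + a * (s - s ^ 2) + z * s ^ 2 =
      u * (σ + (ρ - σ) * s) + (z - a) * s ^ 2 := by rw [ha]; ring
  have hs1 : ‖s‖ ≤ 1 := by
    have := Complex.re_le_norm s
    nlinarith [norm_nonneg s]
  have hs2 : ‖s‖ ^ 2 ≤ 1 := by nlinarith [norm_nonneg s]
  have h1 : ‖(σ : ℂ) + (ρ - σ) * s‖ ≤ 1 - δ / 2 * ‖s‖ ^ 2 := by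
    apply le_of_sq_le_sq _ (by nlinarith [norm_nonneg s])
    have e2 : ‖(σ : ℂ) + (ρ - σ) * s‖ ^ 2 = σ ^ 2 + 2 * σ * (ρ - σ) * s.re + (ρ - σ) ^ 2 * ‖s‖ ^ 2 := by
      rw [Complex.sq_norm, Complex.sq_norm, Complex.normSq_apply, Complex.normSq_apply]
      simp
      ring
    rw [e2]
    have h3 : δ * ‖s‖ ^ 2 ≤ (1 - ρ ^ 2) * ‖s‖ ^ 2 := by
      gcongr; nlinarith
    have h4 := sq_nonneg (δ / 2 * ‖s‖ ^ 2)
    rcases hσ with rfl | rfl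
    · nlinarith [mul_le_mul_of_nonneg_left hs (by linarith : 0 ≤ 1 - ρ)]
    · nlinarith [mul_le_mul_of_nonneg_left hs (by linarith : 0 ≤ 1 + ρ)]
  rw [e]
  calc _ ≤ ‖u * (σ + (ρ - σ) * s)‖ + ‖(z - a) * s ^ 2‖ := norm_add_le _ _
    _ = ‖(σ : ℂ) + (ρ - σ) * s‖ + ‖z - a‖ * ‖s‖ ^ 2 := by
      rw [norm_mul, norm_mul, norm_pow, hu, one_mul]
    _ ≤ (1 - δ / 2 * ‖s‖ ^ 2) + δ / 2 * ‖s‖ ^ 2 := by gcongr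
    _ = 1 := by ring

theorem key_far (u a z s : ℂ) (δ σ : ℝ) (hu : ‖u‖ = 1) (ha : ‖a‖ ≤ 1)
    (hσ : σ = 1 ∨ σ = -1) (hs : ‖s‖ ≤ 1) (hs' : ‖1 - s‖ ≤ δ / 2) (hz : ‖z‖ ≤ 1 - δ) :
    ‖σ * u * (1 - s) + a * (s - s ^ 2) + z * s ^ 2‖ ≤ 1 := by
  have h1 : ‖σ * u * (1 - s)‖ ≤ δ / 2 := by
    have : ‖(σ : ℂ)‖ = 1 := by rcases hσ with rfl | rfl <;> simp
    rw [norm_mul, norm_mul, this, hu]; linarith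
  have h2 : ‖a * (s - s ^ 2)‖ ≤ δ / 2 := by
    have : a * (s - s ^ 2) = a * s * (1 - s) := by ring
    rw [this, norm_mul, norm_mul]
    calc _ ≤ 1 * 1 * (δ / 2) := by gcongr
      _ = _ := by ring
  have h3 : ‖z * s ^ 2‖ ≤ 1 - δ := by
    rw [norm_mul, norm_pow]
    have : ‖s‖ ^ 2 ≤ 1 := pow_le_one₀ (norm_nonneg _) hs
    nlinarith [norm_nonneg z]
  linarith [norm_add₃_le (a := σ * u * (1 - s)) (b := a * (s - s ^ 2)) (c := z * s ^ 2)]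

theorem approx_aux {K : Type*} [TopologicalSpace K] [CompactSpace K]
    (A : Subalgebra ℂ C(K, ℂ)) (hAclosed : IsClosed (A : Set C(K, ℂ))) (t₀ : K)
    (ht : IsStrongBoundaryPoint A t₀) (f : A) (δ : ℝ) (hδ : 0 < δ)
    (hf : ∀ x, ‖(f : C(K, ℂ)) x‖ ≤ 1 - δ) (ε : ℝ) (hε : 0 < ε) :
    ∃ g₁ g₂ : A, (∀ x, ‖(g₁ : C(K, ℂ)) x‖ ≤ 1) ∧ ‖(g₁ : C(K, ℂ)) t₀‖ = 1 ∧
      (∀ x, ‖(g₂ : C(K, ℂ)) x‖ ≤ 1) ∧ ‖(g₂ : C(K, ℂ)) t₀‖ = 1 ∧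
      ∃ w₁ w₂ : ℝ, 0 ≤ w₁ ∧ 0 ≤ w₂ ∧ w₁ + w₂ = 1 ∧
        ‖w₁ • g₁ + w₂ • g₂ - f‖ ≤ ε := by
  set a := (f : C(K, ℂ)) t₀ with ha
  obtain ⟨u, hu, hau⟩ : ∃ u : ℂ, ‖u‖ = 1 ∧ a = (‖a‖ : ℝ) * u := by
    by_cases h0 : a = 0
    · exact ⟨1, by simp, by simp [h0]⟩
    · have : (‖a‖ : ℂ) ≠ 0 := by simpa using h0
      refine ⟨a / ‖a‖, by simp [h0], by field_simp⟩
  set κ := min (δ / 2) (ε / 4) with hκ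
  have hκ0 : 0 < κ := by positivity
  have hκ1 : κ ≤ δ / 2 := min_le_left _ _
  have hκ2 : κ ≤ ε / 4 := min_le_right _ _
  have ha1 : ‖a‖ ≤ 1 - δ := hf t₀
  set U : Set K := {x | ‖(f : C(K, ℂ)) x - a‖ < κ} with hU
  have hUo : IsOpen U := isOpen_lt (by fun_prop) continuous_const
  have htU : t₀ ∈ U := by simp only [hU, Set.mem_ofPred_eq, ← ha, sub_self, norm_zero, hκ0]
  obtain ⟨ψ, h1, h2, h3⟩ := exists_psi A hAclosed t₀ ht U hUo htU κ hκ0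
  set s : A := (1 / 2 : ℂ) • (1 + ψ) with hs
  have hsx : ∀ x, (s : C(K, ℂ)) x = (1 + (ψ : C(K, ℂ)) x) / 2 := by
    intro x; simp [hs]; ring
  have hst : (s : C(K, ℂ)) t₀ = 0 := by rw [hsx, h2]; simp
  have hsd : ∀ x, ‖(s : C(K, ℂ)) x‖ ^ 2 ≤ ((s : C(K, ℂ)) x).re := by
    intro x
    have h4 : ‖(ψ : C(K, ℂ)) x‖ ^ 2 ≤ 1 := pow_le_one₀ (norm_nonneg _) (h1 x)
    rw [hsx, Complex.sq_norm, Complex.normSq_apply]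
    rw [Complex.sq_norm, Complex.normSq_apply] at h4
    simp
    nlinarith
  have hs1 : ∀ x, ‖(s : C(K, ℂ)) x‖ ≤ 1 := by
    intro x
    have := Complex.re_le_norm ((s : C(K, ℂ)) x)
    nlinarith [norm_nonneg ((s : C(K, ℂ)) x), hsd x]
  have hsU : ∀ x ∉ U, ‖1 - (s : C(K, ℂ)) x‖ ≤ κ := by
    intro x hx
    have : 1 - (s : C(K, ℂ)) x = -(((ψ : C(K, ℂ)) x - 1) / 2) := by rw [hsx]; ring
    rw [this, norm_neg, norm_div]
    have := h3 x hx
    norm_num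
    linarith
  let g : ℝ → A := fun σ => (σ * u : ℂ) • (1 - s) + a • (s - s ^ 2) + f * s ^ 2
  have hg : ∀ σ x, ((g σ : A) : C(K, ℂ)) x = σ * u * (1 - (s : C(K, ℂ)) x) +
      a * ((s : C(K, ℂ)) x - (s : C(K, ℂ)) x ^ 2) + (f : C(K, ℂ)) x * (s : C(K, ℂ)) x ^ 2 := by
    intro σ x; simp [g]
  have hg1 : ∀ σ, (σ = 1 ∨ σ = -1) → ∀ x, ‖((g σ : A) : C(K, ℂ)) x‖ ≤ 1 := by
    intro σ hσ x
    rw [hg]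
    by_cases hx : x ∈ U
    · exact key_near u a _ _ ‖a‖ δ σ hu hau (norm_nonneg _) hδ ha1 hσ (hsd x)
        ((le_of_lt hx).trans hκ1)
    · exact key_far u a _ _ δ σ hu (by linarith) hσ (hs1 x) ((hsU x hx).trans hκ1) (hf x)
  have hg2 : ∀ σ, (σ = 1 ∨ σ = -1) → ‖((g σ : A) : C(K, ℂ)) t₀‖ = 1 := by
    intro σ hσ
    have : ‖(σ : ℂ)‖ = 1 := by rcases hσ with rfl | rfl <;> simp
    rw [hg, hst]
    simp only [sub_zero, mul_one, ne_eq, OfNat.ofNat_ne_zero, not_false_eq_true, zero_pow,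
      mul_zero, add_zero, norm_mul, hu, this]
  refine ⟨g 1, g (-1), hg1 1 (Or.inl rfl), hg2 1 (Or.inl rfl), hg1 (-1) (Or.inr rfl),
    hg2 (-1) (Or.inr rfl), (1 + ‖a‖) / 2, (1 - ‖a‖) / 2, by positivity, by linarith, by ring, ?_⟩
  change ‖((((1 + ‖a‖) / 2) • g 1 + ((1 - ‖a‖) / 2) • g (-1) - f : A) : C(K, ℂ))‖ ≤ ε
  rw [ContinuousMap.norm_le _ hε.le]
  intro x
  have e : ((((1 + ‖a‖) / 2) • g 1 + ((1 - ‖a‖) / 2) • g (-1) - f : A) : C(K, ℂ)) x =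
      (a - (f : C(K, ℂ)) x) * ((1 + (s : C(K, ℂ)) x) * (1 - (s : C(K, ℂ)) x)) := by
    have e1 : ((((1 + ‖a‖) / 2) • g 1 + ((1 - ‖a‖) / 2) • g (-1) - f : A) : C(K, ℂ)) x =
      (((1 + ‖a‖) / 2 : ℝ) : ℂ) * (g 1 : C(K, ℂ)) x + (((1 - ‖a‖) / 2 : ℝ) : ℂ) * (g (-1) : C(K, ℂ)) x
        - (f : C(K, ℂ)) x := by
      simp only [← Complex.real_smul]; rfl
    rw [e1, hg, hg]
    push_cast
    linear_combination -(1 - (s : C(K, ℂ)) x) * hau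
  rw [e, norm_mul, norm_mul]
  have b1 : ‖1 + (s : C(K, ℂ)) x‖ ≤ 2 := (norm_add_le _ _).trans (by rw [norm_one]; linarith [hs1 x])
  by_cases hx : x ∈ U
  · have b2 : ‖1 - (s : C(K, ℂ)) x‖ ≤ 2 := (norm_sub_le _ _).trans (by rw [norm_one]; linarith [hs1 x])
    have b3 : ‖a - (f : C(K, ℂ)) x‖ ≤ κ := by rw [norm_sub_rev]; exact le_of_lt hx
    calc _ ≤ κ * (2 * 2) := by gcongr
      _ ≤ ε := by linarith
  · have b2 := hsU x hx
    have b3 : ‖a - (f : C(K, ℂ)) x‖ ≤ 2 := (norm_sub_le _ _).trans (by linarith [hf x])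
    calc _ ≤ 2 * (2 * κ) := by gcongr
      _ ≤ ε := by linarith

/- STATEMENT 19: Let `A` be a uniform algebra on a compact Hausdorff space `K` and
`Γ` a closed boundary for `A` in which the strong boundary points of `A` are dense.
If some strong peak point for `A` is a limit point of `Γ`, then `A` has the convex
diametral local diameter two property: the closed unit ball of `A` is the closed
convex hull of the set of Δ-points of `A`. -/
theorem stmt_19 {K : Type*} [TopologicalSpace K] [CompactSpace K] [T2Space K]
    (A : Subalgebra ℂ C(K, ℂ)) (hAclosed : IsClosed (A : Set C(K, ℂ)))
    (hAsep : ∀ s t : K, s ≠ t → ∃ g ∈ A, g s ≠ g t)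
    (Γ : Set K) (hΓclosed : IsClosed Γ)
    (hΓbd : ∀ g ∈ A, ∃ t ∈ Γ, ‖g t‖ = ‖g‖)
    (hΓdense : Γ ⊆ closure {t | t ∈ Γ ∧ IsStrongBoundaryPoint A t})
    (hpeak : ∃ t₀ ∈ Γ, IsStrongPeakPoint A t₀ ∧ t₀ ∈ closure (Γ \ {t₀})) :
    Metric.closedBall (0 : A) 1 =
      closure (convexHull ℝ
        {h : A | ‖h‖ = 1 ∧ ∀ ε > (0 : ℝ),
          h ∈ closure (convexHull ℝ {g : A | ‖g‖ ≤ 1 ∧ 2 - ε ≤ ‖h - g‖})}) := by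
  obtain ⟨t₀, htΓ, ⟨h, hA, hh, hpk⟩, hlim⟩ := hpeak
  have hsbp : IsStrongBoundaryPoint A t₀ := by
    have hpos : 0 < ‖h‖ := by
      have hne : (Γ \ {t₀}).Nonempty := closure_nonempty_iff.1 ⟨t₀, hlim⟩
      obtain ⟨y, hy1, hy2⟩ := hne
      obtain ⟨c, hc, hcU⟩ := hpk {y}ᶜ isOpen_compl_singleton (fun h => hy2 h.symm)
      have := hcU y (by simp)
      linarith [norm_nonneg (h y)]
    have hne : h t₀ ≠ 0 := by
      rw [← norm_pos_iff, hh]; exact hpos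
    intro U hU htU
    obtain ⟨c, hc, hcU⟩ := hpk U hU htU
    refine ⟨(h t₀)⁻¹ • h, A.smul_mem hA _, by simp [hne], ?_, c / ‖h‖, ?_, ?_⟩
    · rw [norm_smul, norm_inv, hh, inv_mul_cancel₀ hpos.ne']
    · rwa [div_lt_one hpos]
    · intro t ht
      rw [ContinuousMap.smul_apply, norm_smul, norm_inv, hh, div_eq_inv_mul]
      have := hcU t ht
      gcongr
  have hacc : AccPt t₀ (Filter.principal {t | IsStrongBoundaryPoint A t}) := by
    rw [accPt_iff_nhds]
    intro U hU
    obtain ⟨V, hVU, hVo, htV⟩ := mem_nhds_iff.1 hU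
    obtain ⟨y, hyV, hyΓ, hyt⟩ := mem_closure_iff.1 hlim V hVo htV
    obtain ⟨z, ⟨hzV, hzt⟩, hz⟩ := mem_closure_iff.1 (hΓdense hyΓ) (V ∩ {t₀}ᶜ)
      (hVo.inter isOpen_compl_singleton) ⟨hyV, hyt⟩
    exact ⟨z, ⟨hVU hzV, hz.2⟩, hzt⟩
  have hD : ∀ g : A, (∀ x, ‖(g : C(K, ℂ)) x‖ ≤ 1) → ‖(g : C(K, ℂ)) t₀‖ = 1 →
      g ∈ {h : A | ‖h‖ = 1 ∧ ∀ ε > (0 : ℝ),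
          h ∈ closure (convexHull ℝ {g : A | ‖g‖ ≤ 1 ∧ 2 - ε ≤ ‖h - g‖})} := by
    intro g hg hgt
    refine ⟨le_antisymm ?_ ?_, fun ε hε => delta_aux A hAclosed t₀ hacc g hg hgt ε hε⟩
    · exact (ContinuousMap.norm_le _ zero_le_one).2 hg
    · rw [← hgt]
      exact ContinuousMap.norm_coe_le_norm (g : C(K, ℂ)) t₀
  apply Set.Subset.antisymm
  · intro f hf
    have hf1 : ‖f‖ ≤ 1 := mem_closedBall_zero_iff.1 hf
    rw [Metric.mem_closure_iff]
    intro ε hε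
    obtain ⟨δ, hδ0, hδ1, hδε⟩ : ∃ δ : ℝ, 0 < δ ∧ δ < 1 ∧ δ < ε / 2 := by
      obtain ⟨δ, h1, h2⟩ := exists_between (lt_min one_pos (half_pos hε))
      exact ⟨δ, h1, h2.trans_le (min_le_left _ _), h2.trans_le (min_le_right _ _)⟩
    obtain ⟨g₁, g₂, a1, a2, a3, a4, w₁, w₂, hw1, hw2, hw, hd⟩ :=
      approx_aux A hAclosed t₀ hsbp ((1 - δ) • f) δ hδ0 (by
        intro x
        have h1 : ‖(f : C(K, ℂ)) x‖ ≤ 1 := (ContinuousMap.norm_coe_le_norm _ x).trans hf1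
        change ‖(1 - δ) • (f : C(K, ℂ)) x‖ ≤ 1 - δ
        rw [norm_smul, Real.norm_eq_abs, abs_of_pos (by linarith)]
        nlinarith) (ε / 2) (half_pos hε)
    refine ⟨w₁ • g₁ + w₂ • g₂, ?_, ?_⟩
    · exact convex_convexHull ℝ _ (subset_convexHull ℝ _ (hD g₁ a1 a2))
        (subset_convexHull ℝ _ (hD g₂ a3 a4)) hw1 hw2 hw
    · rw [dist_eq_norm, norm_sub_rev]
      have e : w₁ • g₁ + w₂ • g₂ - f = (w₁ • g₁ + w₂ • g₂ - (1 - δ) • f) + (-δ) • f := by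
        module
      rw [e]
      have : ‖(-δ) • f‖ ≤ δ := by
        rw [norm_smul, norm_neg, Real.norm_eq_abs, abs_of_pos hδ0]
        nlinarith
      linarith [norm_add_le (w₁ • g₁ + w₂ • g₂ - (1 - δ) • f) ((-δ) • f)]
  · apply closure_minimal _ Metric.isClosed_closedBall
    apply convexHull_min _ (convex_closedBall _ _)
    intro g hg
    exact mem_closedBall_zero_iff.2 hg.1.le
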